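/- arXiv:1708.01451 — 2 statements merged into one kernel-verified Lean document; each statement's English description precedes it below -/
import Mathlib

section
/- For every positive integer m, the complex number (3 + 4i)^m is not real, i.e. its imaginary part is nonzero. -/
/-!
In `ℤ[i]`, the element `z = 3 + 4i` is coprime to its conjugate, and so is every power of `z`.
A real power of `z` would equal its own conjugate, hence be a unit, but `z` is not a unit.
-/

lemma not_isSelfAdjoint_pow_of_isCoprime_star {R : Type*} [CommSemiring R] [StarMul R] {x : R}
    (hcop : IsCoprime x (star x)) (hx : ¬IsUnit x) {m : ℕ} (hm : m ≠ 0) :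
    ¬IsSelfAdjoint (x ^ m) := by
  intro hself
  have hpow : IsCoprime (x ^ m) (star (x ^ m)) := by
    rw [star_pow]
    exact hcop.pow
  rw [hself.star_eq, isCoprime_self, isUnit_pow_iff hm] at hpow
  exact hx hpow

lemma zsqrtd_isSelfAdjoint_iff_im_eq_zero {d : ℤ} {z : ℤ√d} : IsSelfAdjoint z ↔ z.im = 0 := by
  simp [IsSelfAdjoint, Zsqrtd.ext_iff, neg_eq_self]

lemma zsqrtd_im_pow_ne_zero {d : ℤ} {z : ℤ√d} (hcop : IsCoprime z (star z)) (hz : ¬IsUnit z)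
    {m : ℕ} (hm : m ≠ 0) : (z ^ m).im ≠ 0 :=
  mt zsqrtd_isSelfAdjoint_iff_im_eq_zero.mpr
    (not_isSelfAdjoint_pow_of_isCoprime_star hcop hz hm)

lemma gaussianInt_isCoprime_three_add_four_I_star :
    IsCoprime (⟨3, 4⟩ : GaussianInt) (star ⟨3, 4⟩) :=
  -- `z` has norm `25` and trace `6`, so `z * star z - 4 * (z + star z) = 25 - 24 = 1`.
  ⟨star ⟨3, 4⟩ - 4, -4, by decide⟩

lemma gaussianInt_not_isUnit_three_add_four_I : ¬IsUnit (⟨3, 4⟩ : GaussianInt) := by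
  rw [← Zsqrtd.norm_eq_one_iff]
  decide

/-- For every positive integer `m`, the complex number `(3 + 4i)^m`
is not real: its imaginary part is nonzero. -/
theorem pow_three_add_four_I_not_real (m : ℕ) (hm : 0 < m) :
    ((3 + 4 * Complex.I) ^ m).im ≠ 0 := by
  have him : ((⟨3, 4⟩ : GaussianInt) ^ m).im ≠ 0 :=
    zsqrtd_im_pow_ne_zero gaussianInt_isCoprime_three_add_four_I_star
      gaussianInt_not_isUnit_three_add_four_I hm.ne'
  have hcast : GaussianInt.toComplex ⟨3, 4⟩ = 3 + 4 * Complex.I := by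
    simp [GaussianInt.toComplex_def']
  rw [← hcast, ← map_pow, ← GaussianInt.intCast_im]
  exact Int.cast_ne_zero.mpr him
end

section
/- Let n ≥ 1 and 1 ≤ k ≤ n be integers, let K ≥ 1, let E be the n-dimensional Euclidean space ℝⁿ, and let T : E → E be an invertible linear map satisfying ‖T‖ⁿ ≤ K·det T, where ‖T‖ is the operator norm. Then for every continuous alternating k-linear form ω on E, (det T)·‖ω‖^{n/k} ≤ K^{n−1}·‖ω ∘ T‖^{n/k}, where ω ∘ T denotes the alternating k-form (v₁, …, v_k) ↦ ω(T v₁, …, T v_k) and ‖·‖ on alternating k-forms is the operator norm ‖ω‖ = sup{|ω(v₁,…,v_k)| : ‖v₁‖, …, ‖v_k‖ ≤ 1}. -/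
open Set

/-- The operator norm of an alternating `k`-linear form on `ℝⁿ`:
`‖ω‖ = sup { |ω(v₁,…,v_k)| : ‖v₁‖,…,‖v_k‖ ≤ 1 }`. -/
noncomputable def altFormNorm {n k : ℕ}
    (ω : (EuclideanSpace ℝ (Fin n)) [⋀^Fin k]→ₗ[ℝ] ℝ) : ℝ :=
  sSup ((fun v : Fin k → EuclideanSpace ℝ (Fin n) => |ω v|) ''
    {v | ∀ i, ‖v i‖ ≤ 1})

/-!
Hadamard's inequality in an orthonormal basis whose first vector is a given unit vector `u` gives
`|det T| ≤ ‖T u‖ ‖T‖ⁿ⁻¹`, that is, `|det T| ‖T⁻¹‖ ≤ ‖T‖ⁿ⁻¹`. Together with `‖T‖ⁿ ≤ K |det T|` this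
becomes the minimal dilatation estimate `|det T| ‖T⁻¹‖ⁿ ≤ Kⁿ⁻¹`. Writing `ω = (ω ∘ T) ∘ T⁻¹` bounds
`‖ω‖` by `‖ω ∘ T‖ ‖T⁻¹‖ᵏ`, and raising this to the power `n / k` produces exactly `‖T⁻¹‖ⁿ`.
-/

open Module

section MultilinearContinuity

variable {𝕜 ι G : Type*} {E : ι → Type*} [NontriviallyNormedField 𝕜] [CompleteSpace 𝕜]
  [Finite ι]
  [∀ i, AddCommGroup (E i)] [∀ i, Module 𝕜 (E i)] [∀ i, TopologicalSpace (E i)]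
  [∀ i, IsTopologicalAddGroup (E i)] [∀ i, ContinuousSMul 𝕜 (E i)] [∀ i, T2Space (E i)]
  [∀ i, FiniteDimensional 𝕜 (E i)]
  [AddCommGroup G] [Module 𝕜 G] [TopologicalSpace G] [ContinuousAdd G] [ContinuousSMul 𝕜 G]

theorem continuous_multilinearMap_of_finiteDimensional (f : MultilinearMap 𝕜 E G) :
    Continuous f := by
  classical
  have := Fintype.ofFinite ι
  let b i := finBasis 𝕜 (E i)
  have expand : ⇑f = fun v => ∑ r : (i : ι) → Fin (finrank 𝕜 (E i)),
      (∏ i, (b i).coord (r i) (v i)) • f fun i => b i (r i) := by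
    funext v
    conv_lhs => rw [← funext fun i => (b i).sum_repr (v i)]
    simp only [f.map_sum, f.map_smul_univ, Basis.coord_apply]
  have coord_continuous i j : Continuous ((b i).coord j) :=
    LinearMap.continuous_of_finiteDimensional _
  rw [expand]
  fun_prop

/-- A multilinear map on finite-dimensional spaces, bundled with its automatic continuity: the
multilinear counterpart of `LinearMap.toContinuousLinearMap`. It gives access to the operator norm
of `ContinuousMultilinearMap`. -/
def toContinuousMultilinearMapOfFiniteDimensional (f : MultilinearMap 𝕜 E G) :
    ContinuousMultilinearMap 𝕜 E G :=
  ⟨f, continuous_multilinearMap_of_finiteDimensional f⟩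

end MultilinearContinuity

section MultilinearNorm

variable {𝕜 ι G : Type*} {E E₁ : ι → Type*} [Fintype ι] [SeminormedAddCommGroup G]

theorem sSup_unitClosedBall_eq_norm_continuousMultilinearMap [RCLike 𝕜]
    [∀ i, NormedAddCommGroup (E i)] [∀ i, NormedSpace 𝕜 (E i)] [NormedSpace 𝕜 G]
    (f : ContinuousMultilinearMap 𝕜 E G) :
    sSup ((fun v => ‖f v‖) '' Metric.closedBall 0 1) = ‖f‖ := by
  have norm_mem_upperBounds : ‖f‖ ∈ upperBounds ((fun v => ‖f v‖) '' Metric.closedBall 0 1) := by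
    rintro _ ⟨v, hv, rfl⟩
    exact f.unit_le_opNorm (mem_closedBall_zero_iff.1 hv)
  have sSup_nonneg : 0 ≤ sSup ((fun v => ‖f v‖) '' Metric.closedBall 0 1) :=
    Real.sSup_nonneg (by rintro _ ⟨v, -, rfl⟩; positivity)
  refine le_antisymm
    (csSup_le ((Metric.nonempty_closedBall.2 zero_le_one).image _) norm_mem_upperBounds)
    (f.opNorm_le_bound sSup_nonneg fun v => ?_)
  by_cases hv : ∃ i, v i = 0
  · obtain ⟨i, hi⟩ := hv
    rw [f.map_coord_zero i hi, norm_zero]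
    positivity
  push Not at hv
  have prod_pos : 0 < ∏ i, ‖v i‖ := Finset.prod_pos fun i _ => norm_pos_iff.2 (hv i)
  have normalize : ‖f fun i => (‖v i‖ : 𝕜)⁻¹ • v i‖ = ‖f v‖ / ∏ i, ‖v i‖ := by
    rw [f.map_smul_univ, norm_smul, norm_prod]
    simp [div_eq_inv_mul]
  rw [← div_le_iff₀ prod_pos, ← normalize]
  refine le_csSup ⟨_, norm_mem_upperBounds⟩ ⟨_, ?_, rfl⟩
  rw [mem_closedBall_zero_iff, pi_norm_le_iff_of_nonneg zero_le_one]
  exact fun i => (norm_smul_inv_norm (hv i)).le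

theorem norm_le_norm_compContinuousLinearEquiv_mul_prod_norm_symm [NontriviallyNormedField 𝕜]
    [∀ i, SeminormedAddCommGroup (E i)] [∀ i, NormedSpace 𝕜 (E i)]
    [∀ i, SeminormedAddCommGroup (E₁ i)] [∀ i, NormedSpace 𝕜 (E₁ i)] [NormedSpace 𝕜 G]
    (f : ContinuousMultilinearMap 𝕜 E₁ G) (e : ∀ i, E i ≃L[𝕜] E₁ i) :
    ‖f‖ ≤ ‖f.compContinuousLinearMap fun i => (e i : E i →L[𝕜] E₁ i)‖ *
      ∏ i, ‖((e i).symm : E₁ i →L[𝕜] E i)‖ := by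
  have factor : (f.compContinuousLinearMap fun i => (e i : E i →L[𝕜] E₁ i)).compContinuousLinearMap
      (fun i => ((e i).symm : E₁ i →L[𝕜] E i)) = f := by
    ext v
    simp
  simpa only [factor] using
    (f.compContinuousLinearMap fun i => (e i : E i →L[𝕜] E₁ i)).norm_compContinuousLinearMap_le
      fun i => ((e i).symm : E₁ i →L[𝕜] E i)

end MultilinearNorm

section Determinant

variable {E : Type*} [NormedAddCommGroup E] [InnerProductSpace ℝ E]

theorem abs_det_le_prod_norm_apply_orthonormalBasis {ι : Type*} [Fintype ι]
    (b : OrthonormalBasis ι ℝ E) (T : E →ₗ[ℝ] E) :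
    |LinearMap.det T| ≤ ∏ i, ‖T (b i)‖ := by
  classical
  let c := b.reindex (Fintype.equivFin ι)
  have : Fact (finrank ℝ E = Fintype.card ι) := ⟨finrank_eq_card_basis b.toBasis⟩
  calc |LinearMap.det T| = |c.toBasis.det (T ∘ c)| := by
        rw [← c.coe_toBasis, Basis.det_comp, Basis.det_self, mul_one]
    _ = |c.toBasis.orientation.volumeForm (T ∘ c)| :=
        (c.toBasis.orientation.volumeForm_robust' c _).symm
    _ ≤ ∏ j, ‖T (c j)‖ := c.toBasis.orientation.abs_volumeForm_apply_le _
    _ = ∏ i, ‖T (b i)‖ := by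
        simpa [c] using (Fintype.equivFin ι).symm.prod_comp fun i => ‖T (b i)‖

variable [FiniteDimensional ℝ E]

theorem abs_det_le_norm_apply_mul_opNorm_pow (T : E →L[ℝ] E) {u : E} (hu : ‖u‖ = 1) :
    |T.det| ≤ ‖T u‖ * ‖T‖ ^ (finrank ℝ E - 1) := by
  classical
  obtain ⟨s, b, hus, hb⟩ := Orthonormal.exists_orthonormalBasis_extension (𝕜 := ℝ) (v := {u})
    ⟨by simp [hu], fun i j hij => (hij (Subsingleton.elim i j)).elim⟩
  let i₀ : s := ⟨u, hus rfl⟩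
  have hbi₀ : b i₀ = u := congrFun hb i₀
  calc |T.det| ≤ ∏ i, ‖T (b i)‖ :=
        abs_det_le_prod_norm_apply_orthonormalBasis b (T : E →ₗ[ℝ] E)
    _ = ‖T u‖ * ∏ i ∈ {i₀}ᶜ, ‖T (b i)‖ := by rw [Fintype.prod_eq_mul_prod_compl i₀, hbi₀]
    _ ≤ ‖T u‖ * ∏ _i ∈ ({i₀}ᶜ : Finset s), ‖T‖ := by
        gcongr with i
        exact T.unit_le_opNorm _ (b.norm_eq_one i).le
    _ = ‖T u‖ * ‖T‖ ^ (finrank ℝ E - 1) := by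
        rw [Finset.prod_const, Finset.card_compl, Finset.card_singleton,
          finrank_eq_card_basis b.toBasis]

theorem abs_det_mul_norm_le (T : E →L[ℝ] E) (v : E) :
    |T.det| * ‖v‖ ≤ ‖T‖ ^ (finrank ℝ E - 1) * ‖T v‖ := by
  rcases eq_or_ne v 0 with rfl | hv
  · simp
  have hunit := abs_det_le_norm_apply_mul_opNorm_pow T (norm_smul_inv_norm (𝕜 := ℝ) hv)
  have hv_pos := norm_pos_iff.2 hv
  rw [map_smul, norm_smul, norm_inv, RCLike.ofReal_real_eq_id, id, norm_norm, mul_assoc,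
    inv_mul_eq_div, le_div_iff₀ hv_pos] at hunit
  rwa [mul_comm (_ ^ _)]

theorem abs_det_mul_opNorm_symm_le (T : E ≃L[ℝ] E) :
    |(T : E →L[ℝ] E).det| * ‖(T.symm : E →L[ℝ] E)‖ ≤
      ‖(T : E →L[ℝ] E)‖ ^ (finrank ℝ E - 1) := by
  have hsmul : ‖(T : E →L[ℝ] E).det • (T.symm : E →L[ℝ] E)‖ ≤
      ‖(T : E →L[ℝ] E)‖ ^ (finrank ℝ E - 1) :=
    ContinuousLinearMap.opNorm_le_bound _ (by positivity) fun v => by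
      simpa [norm_smul] using abs_det_mul_norm_le (T : E →L[ℝ] E) (T.symm v)
  rwa [norm_smul, Real.norm_eq_abs] at hsmul

theorem abs_det_mul_opNorm_symm_pow_le {K : ℝ} (T : E ≃L[ℝ] E)
    (hT : ‖(T : E →L[ℝ] E)‖ ^ finrank ℝ E ≤ K * |(T : E →L[ℝ] E).det|) :
    |(T : E →L[ℝ] E).det| * ‖(T.symm : E →L[ℝ] E)‖ ^ finrank ℝ E ≤ K ^ (finrank ℝ E - 1) := by
  have hdet : 0 < |(T : E →L[ℝ] E).det| := abs_pos.2 T.toLinearEquiv.isUnit_det'.ne_zero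
  have hinv := abs_det_mul_opNorm_symm_le T
  rcases hn : finrank ℝ E with - | m
  · simp [ContinuousLinearMap.det, LinearMap.det_eq_one_of_finrank_eq_zero hn]
  rw [hn, Nat.add_sub_cancel] at hinv
  rw [hn] at hT
  rw [Nat.add_sub_cancel]
  set d := |(T : E →L[ℝ] E).det|
  refine le_of_mul_le_mul_right ?_ (pow_pos hdet m)
  calc d * ‖(T.symm : E →L[ℝ] E)‖ ^ (m + 1) * d ^ m
      = (d * ‖(T.symm : E →L[ℝ] E)‖) ^ (m + 1) := by ring
    _ ≤ (‖(T : E →L[ℝ] E)‖ ^ m) ^ (m + 1) := by gcongr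
    _ = (‖(T : E →L[ℝ] E)‖ ^ (m + 1)) ^ m := pow_right_comm _ _ _
    _ ≤ (K * d) ^ m := by gcongr
    _ = K ^ m * d ^ m := mul_pow _ _ _

end Determinant

theorem pullback_alternating_form_lower_bound_general {ι E G : Type*} [Fintype ι] [Nonempty ι]
    [NormedAddCommGroup E] [InnerProductSpace ℝ E] [FiniteDimensional ℝ E]
    [SeminormedAddCommGroup G] [NormedSpace ℝ G] {K : ℝ} (hK : 0 ≤ K) (T : E →L[ℝ] E)
    (hT : ‖T‖ ^ finrank ℝ E ≤ K * |T.det|) (ω : ContinuousMultilinearMap ℝ (fun _ : ι => E) G) :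
    |T.det| * ‖ω‖ ^ ((finrank ℝ E : ℝ) / Fintype.card ι) ≤
      K ^ (finrank ℝ E - 1) *
        ‖ω.compContinuousLinearMap fun _ => T‖ ^ ((finrank ℝ E : ℝ) / Fintype.card ι) := by
  by_cases hdet : T.det = 0
  · rw [hdet, abs_zero, zero_mul]
    positivity
  obtain ⟨T, rfl⟩ : ∃ e : E ≃L[ℝ] E, (e : E →L[ℝ] E) = T :=
    ⟨_, T.coe_toContinuousLinearEquivOfDetNeZero hdet⟩
  set p := (finrank ℝ E : ℝ) / Fintype.card ι with hp
  set B := ‖ω.compContinuousLinearMap fun _ => (T : E →L[ℝ] E)‖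
  set s := ‖(T.symm : E →L[ℝ] E)‖
  have hω : ‖ω‖ ≤ B * s ^ Fintype.card ι := by
    simpa using norm_le_norm_compContinuousLinearEquiv_mul_prod_norm_symm ω fun _ => T
  have hs : (s ^ Fintype.card ι) ^ p = s ^ finrank ℝ E := by
    rw [← Real.rpow_natCast_mul (norm_nonneg _), hp, mul_div_cancel₀ _ (by positivity),
      Real.rpow_natCast]
  calc |(T : E →L[ℝ] E).det| * ‖ω‖ ^ p
      ≤ |(T : E →L[ℝ] E).det| * (B * s ^ Fintype.card ι) ^ p := by gcongr
    _ = |(T : E →L[ℝ] E).det| * s ^ finrank ℝ E * B ^ p := by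
        rw [Real.mul_rpow (by positivity) (by positivity), hs]
        ring
    _ ≤ K ^ (finrank ℝ E - 1) * B ^ p := by
        gcongr
        exact abs_det_mul_opNorm_symm_pow_le T hT

theorem altFormNorm_eq_norm {n k : ℕ} (ω : EuclideanSpace ℝ (Fin n) [⋀^Fin k]→ₗ[ℝ] ℝ) :
    altFormNorm ω = ‖toContinuousMultilinearMapOfFiniteDimensional ω.toMultilinearMap‖ := by
  have hball : {v : Fin k → EuclideanSpace ℝ (Fin n) | ∀ i, ‖v i‖ ≤ 1} =
      Metric.closedBall 0 1 := by
    ext v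
    simp [pi_norm_le_iff_of_nonneg]
  rw [altFormNorm, hball, ← sSup_unitClosedBall_eq_norm_continuousMultilinearMap]
  rfl

/-- If an invertible linear map `T` on `ℝⁿ` satisfies `‖T‖ⁿ ≤ K · det T`,
then every alternating `k`-form `ω` satisfies
`(det T) · ‖ω‖^{n/k} ≤ K^{n-1} · ‖ω ∘ T‖^{n/k}`. -/
theorem pullback_alternating_form_lower_bound
    (n k : ℕ) (hn : 1 ≤ n) (hk : 1 ≤ k) (hkn : k ≤ n) (K : ℝ) (hK : 1 ≤ K)
    (T : EuclideanSpace ℝ (Fin n) →L[ℝ] EuclideanSpace ℝ (Fin n))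
    (hTinv : Function.Bijective T)
    (hT : ‖T‖ ^ n ≤ K * LinearMap.det
      (T : EuclideanSpace ℝ (Fin n) →ₗ[ℝ] EuclideanSpace ℝ (Fin n)))
    (ω : (EuclideanSpace ℝ (Fin n)) [⋀^Fin k]→ₗ[ℝ] ℝ) :
    LinearMap.det (T : EuclideanSpace ℝ (Fin n) →ₗ[ℝ] EuclideanSpace ℝ (Fin n)) *
        altFormNorm ω ^ ((n : ℝ) / k) ≤
      K ^ (n - 1) * altFormNorm (ω.compLinearMap
        (T : EuclideanSpace ℝ (Fin n) →ₗ[ℝ] EuclideanSpace ℝ (Fin n))) ^ ((n : ℝ) / k) := by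
  have : Nonempty (Fin k) := ⟨⟨0, hk⟩⟩
  have hdet : |T.det| = T.det := abs_of_nonneg <|
    nonneg_of_mul_nonneg_right ((pow_nonneg (norm_nonneg T) n).trans hT) (by linarith)
  simpa only [altFormNorm_eq_norm, finrank_euclideanSpace_fin, Fintype.card_fin, hdet] using!
    pullback_alternating_form_lower_bound_general (zero_le_one.trans hK) T
      (by simpa only [finrank_euclideanSpace_fin, hdet] using! hT)
      (toContinuousMultilinearMapOfFiniteDimensional ω.toMultilinearMap)
end
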